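/- Let V be an n-dimensional real inner product space (n ≥ 2), W a real inner product space, ζ : V × V → W a symmetric bilinear map, and T the tensor defined by the algebraic Gauss equation. Let r be a real number with r > n(n−1) and a(r) = (n−1)(n+r)(n²−n−r)/(nr) (so a(r) < 0). Then for every orthonormal basis (e_1,…,e_n) of V, writing ζ_{ij} = ζ(e_i,e_j), τ_T = Σ_{1≤i<j≤n} T(e_i,e_j,e_j,e_i), C^{T,ζ} = (1/n) Σ_{i,j=1}^n ‖ζ_{ij}‖², and C^{T,ζ}(Π_{n−1}) = (1/(n−1)) Σ_{i,j=1}^{n−1} ‖ζ_{ij}‖² for the hyperplane Π_{n−1} spanned by e_1,…,e_{n−1}, one has 2τ_T/(n(n−1)) ≤ (1/(n(n−1))) ( r · C^{T,ζ} + a(r) · C^{T,ζ}(Π_{n−1}) ). In particular, the T-normalized scalar curvature is bounded above by (1/(n(n−1))) times the algebraic Casorati curvature δ̂_{C^{T,ζ}}(r;n−1) = r·C^{T,ζ} + a(r)·sup over hyperplanes of C^{T,ζ}(Π_{n−1}). -/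

import Mathlib

open RealInnerProductSpace

/-!
Contracting the Gauss equation gives `2τ = ‖tr h‖² - ‖h‖²`. Split the trace into its part over a
hyperplane and the entry `h p p` in the normal direction, and apply Young's inequality
`‖x + y‖² ≤ (1 + ε)‖x‖² + (1 + ε⁻¹)‖y‖²`. The hyperplane part is controlled by Cauchy-Schwarz, and
the normal entry by what remains of `‖h‖²` outside the hyperplane block. The coefficient `a(r)` is
exactly the one obtained for `ε = n / r`.
-/

section Definitions

variable {ι W : Type*}

/-- The tensor built from `h : ι → ι → W` by the algebraic Gauss equation. Here `h i j` stands for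
the value `ζ(e_i, e_j)` of a bilinear map on a frame. -/
noncomputable def gaussTensor [SeminormedAddCommGroup W] [InnerProductSpace ℝ W]
    (h : ι → ι → W) (i j k l : ι) : ℝ :=
  ⟪h i l, h j k⟫ - ⟪h i k, h j l⟫

/-- The scalar curvature of a four-tensor given by its components in a frame: each unordered pair
of distinct indices is counted once. -/
def scalarCurvature [Fintype ι] [Preorder ι] [LocallyFiniteOrderTop ι]
    (T : ι → ι → ι → ι → ℝ) : ℝ :=
  ∑ i, ∑ j ∈ Finset.Ioi i, T i j j i

/-- The squared Hilbert-Schmidt norm of the block of `h` with indices in `s`, i.e. of the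
restriction of the bilinear map to the span of the vectors of an orthonormal frame indexed by `s`.
-/
def blockNormSq [SeminormedAddCommGroup W] (h : ι → ι → W) (s : Finset ι) : ℝ :=
  ∑ i ∈ s, ∑ j ∈ s, ‖h i j‖ ^ 2

/-- The algebraic Casorati curvature of the subspace spanned by the vectors of an orthonormal frame
indexed by `s`; it is `0` for empty `s`. -/
noncomputable def casoratiCurvature [SeminormedAddCommGroup W] (h : ι → ι → W)
    (s : Finset ι) : ℝ :=
  1 / (s.card : ℝ) * blockNormSq h s

/-- The coefficient `a(r)` of the Casorati curvature of a hyperplane in dimension `n`; it is `0`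
for `n = 0` or `r = 0`. -/
noncomputable def casoratiCoeff (n r : ℝ) : ℝ :=
  (n - 1) * (n + r) * (n ^ 2 - n - r) / (n * r)

end Definitions

theorem two_mul_sum_sum_Ioi {ι R : Type*} [Fintype ι] [LinearOrder ι] [LocallyFiniteOrderTop ι]
    [LocallyFiniteOrderBot ι] [NonAssocSemiring R] {f : ι → ι → R}
    (hsymm : ∀ i j, f i j = f j i) (hdiag : ∀ i, f i i = 0) :
    2 * ∑ i, ∑ j ∈ Finset.Ioi i, f i j = ∑ i, ∑ j, f i j := by
  calc 2 * ∑ i, ∑ j ∈ Finset.Ioi i, f i j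
      = ∑ i, ∑ j ∈ Finset.Ioi i, (f j i + f i j) := by
        simp only [two_mul, Finset.sum_add_distrib, hsymm]
    _ = ∑ i, ∑ j ∈ {i}ᶜ, f j i := Finset.sum_sum_Ioi_add_eq_sum_sum_off_diag f
    _ = ∑ i, ∑ j, f i j := by
        refine Finset.sum_congr rfl fun i _ => ?_
        rw [Fintype.sum_eq_add_sum_compl i, hdiag, zero_add]
        exact Finset.sum_congr rfl fun j _ => hsymm j i

section Norm

variable {ι W : Type*} [SeminormedAddCommGroup W]

theorem norm_add_sq_le_one_add_mul (x y : W) {ε : ℝ} (hε : 0 < ε) :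
    ‖x + y‖ ^ 2 ≤ (1 + ε) * ‖x‖ ^ 2 + (1 + ε⁻¹) * ‖y‖ ^ 2 := by
  calc ‖x + y‖ ^ 2
      ≤ (‖x‖ + ‖y‖) ^ 2 := by gcongr; exact norm_add_le x y
    _ = ‖x‖ ^ 2 + 2 * ‖x‖ * ‖y‖ + ‖y‖ ^ 2 := by ring
    _ ≤ ‖x‖ ^ 2 + (ε * ‖x‖ ^ 2 + ε⁻¹ * ‖y‖ ^ 2) + ‖y‖ ^ 2 := by
        gcongr; exact two_mul_le_add_mul_sq hε
    _ = (1 + ε) * ‖x‖ ^ 2 + (1 + ε⁻¹) * ‖y‖ ^ 2 := by ring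

theorem norm_sum_sq_le_card_mul_sum_norm_sq (s : Finset ι) (f : ι → W) :
    ‖∑ i ∈ s, f i‖ ^ 2 ≤ s.card * ∑ i ∈ s, ‖f i‖ ^ 2 := by
  calc ‖∑ i ∈ s, f i‖ ^ 2
      ≤ (∑ i ∈ s, ‖f i‖) ^ 2 := by gcongr; exact norm_sum_le s f
    _ ≤ s.card * ∑ i ∈ s, ‖f i‖ ^ 2 := sq_sum_le_card_mul_sum_sq

theorem sum_norm_diag_sq_le_blockNormSq (h : ι → ι → W) (s : Finset ι) :
    ∑ i ∈ s, ‖h i i‖ ^ 2 ≤ blockNormSq h s :=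
  Finset.sum_le_sum fun i hi =>
    Finset.single_le_sum (f := fun j => ‖h i j‖ ^ 2) (fun _ _ => sq_nonneg _) hi

theorem blockNormSq_add_norm_sq_le (h : ι → ι → W) {s : Finset ι} {p : ι} (hp : p ∉ s) :
    blockNormSq h s + ‖h p p‖ ^ 2 ≤ blockNormSq h (s.cons p hp) := by
  have hrows : blockNormSq h s ≤ ∑ i ∈ s, ∑ j ∈ s.cons p hp, ‖h i j‖ ^ 2 :=
    Finset.sum_le_sum fun i _ =>
      Finset.sum_le_sum_of_subset_of_nonneg (Finset.subset_cons hp) fun _ _ _ => sq_nonneg _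
  have hrow : ‖h p p‖ ^ 2 ≤ ∑ j ∈ s.cons p hp, ‖h p j‖ ^ 2 :=
    Finset.single_le_sum (f := fun j => ‖h p j‖ ^ 2) (fun _ _ => sq_nonneg _)
      (Finset.mem_cons_self p s)
  calc blockNormSq h s + ‖h p p‖ ^ 2
      ≤ ∑ i ∈ s, ∑ j ∈ s.cons p hp, ‖h i j‖ ^ 2 + ∑ j ∈ s.cons p hp, ‖h p j‖ ^ 2 :=
        add_le_add hrows hrow
    _ = blockNormSq h (s.cons p hp) := by
        rw [add_comm, blockNormSq]
        exact (Finset.sum_cons (f := fun i => ∑ j ∈ s.cons p hp, ‖h i j‖ ^ 2) hp).symm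

theorem norm_sum_diag_cons_sq_le (h : ι → ι → W) {s : Finset ι} {p : ι} (hp : p ∉ s)
    {ε : ℝ} (hε : 0 < ε) :
    ‖∑ i ∈ s.cons p hp, h i i‖ ^ 2 ≤
      (1 + ε) * (s.card * blockNormSq h s) +
        (1 + ε⁻¹) * (blockNormSq h (s.cons p hp) - blockNormSq h s) := by
  have htangent : ‖∑ i ∈ s, h i i‖ ^ 2 ≤ s.card * blockNormSq h s :=
    (norm_sum_sq_le_card_mul_sum_norm_sq s fun i => h i i).trans <| by
      gcongr; exact sum_norm_diag_sq_le_blockNormSq h s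
  have hnormal : ‖h p p‖ ^ 2 ≤ blockNormSq h (s.cons p hp) - blockNormSq h s :=
    le_sub_iff_add_le'.mpr (blockNormSq_add_norm_sq_le h hp)
  rw [Finset.sum_cons, add_comm]
  exact (norm_add_sq_le_one_add_mul _ _ hε).trans (by gcongr)

end Norm

section Curvature

variable {ι W : Type*} [Fintype ι] [LinearOrder ι] [LocallyFiniteOrderTop ι]
  [LocallyFiniteOrderBot ι] [SeminormedAddCommGroup W] [InnerProductSpace ℝ W]

theorem two_mul_scalarCurvature_gaussTensor {h : ι → ι → W} (hsymm : ∀ i j, h i j = h j i) :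
    2 * scalarCurvature (gaussTensor h) =
      ‖∑ i, h i i‖ ^ 2 - blockNormSq h Finset.univ := by
  have hsec (i j : ι) : gaussTensor h i j j i = ⟪h i i, h j j⟫ - ‖h i j‖ ^ 2 := by
    rw [gaussTensor, hsymm j i, real_inner_self_eq_norm_sq]
  calc 2 * scalarCurvature (gaussTensor h)
      = ∑ i, ∑ j, gaussTensor h i j j i :=
        two_mul_sum_sum_Ioi (fun i j => by rw [hsec, hsec, hsymm i j, real_inner_comm])
          fun i => sub_self _
    _ = ∑ i, ∑ j, ⟪h i i, h j j⟫ - blockNormSq h Finset.univ := by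
        simp only [hsec, Finset.sum_sub_distrib, blockNormSq]
    _ = ‖∑ i, h i i‖ ^ 2 - blockNormSq h Finset.univ := by
        rw [← real_inner_self_eq_norm_sq, sum_inner]
        simp only [inner_sum]

theorem two_mul_scalarCurvature_gaussTensor_le [Nontrivial ι] {h : ι → ι → W}
    (hsymm : ∀ i j, h i j = h j i) (p : ι) {r : ℝ} (hr : 0 < r) :
    2 * scalarCurvature (gaussTensor h) ≤
      r * casoratiCurvature h Finset.univ +
        casoratiCoeff (Fintype.card ι) r * casoratiCurvature h (Finset.univ.erase p) := by
  have hcard : ((Finset.univ.erase p).card : ℝ) = Fintype.card ι - 1 :=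
    Finset.cast_card_erase_of_mem (Finset.mem_univ p)
  have hn : 1 < (Fintype.card ι : ℝ) := mod_cast Fintype.one_lt_card
  have hn₀ : 0 < (Fintype.card ι : ℝ) := one_pos.trans hn
  have hn₁ : (Fintype.card ι : ℝ) - 1 ≠ 0 := (sub_pos.mpr hn).ne'
  have htrace := norm_sum_diag_cons_sq_le h (Finset.notMem_erase p Finset.univ) (div_pos hn₀ hr)
  rw [Finset.cons_eq_insert, Finset.insert_erase (Finset.mem_univ p), hcard] at htrace
  rw [two_mul_scalarCurvature_gaussTensor hsymm, casoratiCurvature, casoratiCurvature, hcard,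
    Finset.card_univ]
  refine (sub_le_sub_right htrace _).trans_eq ?_
  rw [casoratiCoeff]
  field_simp
  ring

end Curvature

theorem sum_sum_ite_lt_eq_scalarCurvature {ι : Type*} [Fintype ι] [LinearOrder ι]
    [LocallyFiniteOrderTop ι] (T : ι → ι → ι → ι → ℝ) :
    ∑ i, ∑ j, (if i < j then T i j j i else 0) = scalarCurvature T := by
  simp only [scalarCurvature, ← Finset.sum_filter, Finset.filter_lt_eq_Ioi]

theorem filter_val_lt_eq_univ_erase_last (m : ℕ) :
    Finset.univ.filter (fun i : Fin (m + 1) => (i : ℕ) < m) = Finset.univ.erase (Fin.last m) := by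
  ext i
  simp [← Fin.lt_last_iff_ne_last, Fin.lt_def]

theorem algebraic_casorati_inequality_large_r_general
    {V W : Type*} [SeminormedAddCommGroup W] [InnerProductSpace ℝ W]
    (n : ℕ) (hn : 2 ≤ n) (e : Fin n → V)
    (ζ : V → V → W) (hζ : ∀ X Y : V, ζ X Y = ζ Y X)
    (T : V → V → V → V → ℝ)
    (hT : ∀ X Y Z W' : V, T X Y Z W' = ⟪ζ X W', ζ Y Z⟫ - ⟪ζ X Z, ζ Y W'⟫)
    (r : ℝ) (hr : 0 < r) (τ C CP : ℝ)
    (hτ : τ = ∑ i : Fin n, ∑ j : Fin n,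
        if i < j then T (e i) (e j) (e j) (e i) else 0)
    (hC : C = (1 / (n : ℝ)) * ∑ i : Fin n, ∑ j : Fin n, ‖ζ (e i) (e j)‖ ^ 2)
    (hCP : CP = (1 / ((n : ℝ) - 1)) *
        ∑ i ∈ Finset.univ.filter (fun i : Fin n => (i : ℕ) < n - 1),
          ∑ j ∈ Finset.univ.filter (fun j : Fin n => (j : ℕ) < n - 1),
            ‖ζ (e i) (e j)‖ ^ 2) :
    2 * τ / ((n : ℝ) * ((n : ℝ) - 1)) ≤
      (1 / ((n : ℝ) * ((n : ℝ) - 1))) *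
        (r * C +
          (((n : ℝ) - 1) * ((n : ℝ) + r) * ((n : ℝ) ^ 2 - (n : ℝ) - r) / ((n : ℝ) * r))
            * CP) := by
  obtain ⟨m, rfl⟩ : ∃ m, n = m + 1 := ⟨n - 1, by omega⟩
  have : Nontrivial (Fin (m + 1)) := Fin.nontrivial_iff_two_le.mpr hn
  let h : Fin (m + 1) → Fin (m + 1) → W := fun i j => ζ (e i) (e j)
  have hτ' : τ = scalarCurvature (gaussTensor h) := by
    simp only [hτ, hT, ← sum_sum_ite_lt_eq_scalarCurvature, gaussTensor, h]
  have hC' : C = casoratiCurvature h Finset.univ := by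
    rw [hC, casoratiCurvature, Finset.card_univ, Fintype.card_fin, blockNormSq]
  have hCP' : CP = casoratiCurvature h (Finset.univ.erase (Fin.last m)) := by
    rw [hCP, casoratiCurvature, Finset.cast_card_erase_of_mem (Finset.mem_univ _),
      Finset.card_univ, Fintype.card_fin, blockNormSq, Nat.add_sub_cancel,
      filter_val_lt_eq_univ_erase_last]
  have hmain := two_mul_scalarCurvature_gaussTensor_le (h := h) (fun _ _ => hζ _ _) (Fin.last m) hr
  rw [← hτ', ← hC', ← hCP', Fintype.card_fin, casoratiCoeff] at hmain
  rw [div_eq_mul_one_div, mul_comm]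
  refine mul_le_mul_of_nonneg_left hmain (one_div_nonneg.mpr ?_)
  exact mul_nonneg (Nat.cast_nonneg _) (sub_nonneg.mpr (mod_cast Nat.le_add_left 1 m))

/-- STATEMENT 9: For `r > n(n−1)` and any orthonormal basis, the normalized
`T`-scalar curvature is bounded by `(1/(n(n−1)))(r·C^{T,ζ} + a(r)·C^{T,ζ}(P_{n−1}))`,
where `P_{n−1}` is the hyperplane spanned by `e_1,…,e_{n−1}`. -/
theorem algebraic_casorati_inequality_large_r
    {V W : Type*} [NormedAddCommGroup V] [InnerProductSpace ℝ V]
    [FiniteDimensional ℝ V] [NormedAddCommGroup W] [InnerProductSpace ℝ W]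
    (n : ℕ) (hn : 2 ≤ n) (e : OrthonormalBasis (Fin n) ℝ V)
    (ζ : V →ₗ[ℝ] V →ₗ[ℝ] W) (hζ : ∀ X Y : V, ζ X Y = ζ Y X)
    (T : V → V → V → V → ℝ)
    (hT : ∀ X Y Z W' : V, T X Y Z W' = ⟪ζ X W', ζ Y Z⟫ - ⟪ζ X Z, ζ Y W'⟫)
    (r : ℝ) (hr0 : 0 < r) (hr1 : (n : ℝ) * ((n : ℝ) - 1) < r)
    (τ C CP : ℝ)
    (hτ : τ = ∑ i : Fin n, ∑ j : Fin n,
        if i < j then T (e i) (e j) (e j) (e i) else 0)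
    (hC : C = (1 / (n : ℝ)) * ∑ i : Fin n, ∑ j : Fin n, ‖ζ (e i) (e j)‖ ^ 2)
    (hCP : CP = (1 / ((n : ℝ) - 1)) *
        ∑ i ∈ Finset.univ.filter (fun i : Fin n => (i : ℕ) < n - 1),
          ∑ j ∈ Finset.univ.filter (fun j : Fin n => (j : ℕ) < n - 1),
            ‖ζ (e i) (e j)‖ ^ 2) :
    2 * τ / ((n : ℝ) * ((n : ℝ) - 1)) ≤
      (1 / ((n : ℝ) * ((n : ℝ) - 1))) *
        (r * C +
          (((n : ℝ) - 1) * ((n : ℝ) + r) * ((n : ℝ) ^ 2 - (n : ℝ) - r) / ((n : ℝ) * r))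
            * CP) :=
  algebraic_casorati_inequality_large_r_general n hn e (fun X Y => ζ X Y) hζ T hT r hr0
    τ C CP hτ hC hCP
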